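/- Let n ≥ 1, s ∈ (0,1) with n > 2s, and let K be an admissible kernel. Assume 1 < q < n/(n−2s) (the subcritical range). Then every nonnegative weak supersolution u of L_K u = u^q in ℝⁿ satisfies u = 0 almost everywhere in ℝⁿ. -/

import Mathlib

open MeasureTheory Metric

noncomputable section

abbrev Euc (n : ℕ) := EuclideanSpace ℝ (Fin n)

def IsAdmissibleKernel (n : ℕ) (s lam Lam : ℝ) (K : Euc n → ℝ) : Prop :=
  0 < lam ∧ lam ≤ Lam ∧ Measurable K ∧
  (∀ z : Euc n, z ≠ 0 → K z = K (-z)) ∧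
  (∀ z : Euc n, z ≠ 0 →
    lam * ‖z‖ ^ (-(n : ℝ) - 2 * s) ≤ K z ∧ K z ≤ Lam * ‖z‖ ^ (-(n : ℝ) - 2 * s))

def LK (n : ℕ) (K φ : Euc n → ℝ) (x : Euc n) : ℝ :=
  (1 / 2) * ∫ z : Euc n, (2 * φ x - φ (x + z) - φ (x - z)) * K z

def IsTestFun (n : ℕ) (φ : Euc n → ℝ) : Prop :=
  ContDiff ℝ (⊤ : ℕ∞) φ ∧ HasCompactSupport φ

def MemL1Tail (n : ℕ) (s : ℝ) (u : Euc n → ℝ) : Prop :=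
  LocallyIntegrable u volume ∧
  Integrable (fun x : Euc n => |u x| * (1 + ‖x‖) ^ (-(n : ℝ) - 2 * s)) volume

def MemLqLoc (n : ℕ) (q : ℝ) (u : Euc n → ℝ) : Prop :=
  ∀ R : ℝ, 0 < R → IntegrableOn (fun x : Euc n => u x ^ q) (ball (0 : Euc n) R) volume

def IsWeakSupersol (n : ℕ) (s q : ℝ) (K u : Euc n → ℝ) : Prop :=
  Measurable u ∧ (∀ x, 0 ≤ u x) ∧ MemLqLoc n q u ∧ MemL1Tail n s u ∧
  ∀ φ : Euc n → ℝ, IsTestFun n φ → (∀ x, 0 ≤ φ x) →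
    (∫ x : Euc n, u x ^ q * φ x) ≤ ∫ x : Euc n, u x * LK n K φ x

def IsCutoff (n : ℕ) (η : Euc n → ℝ) : Prop :=
  ContDiff ℝ (⊤ : ℕ∞) η ∧ (∀ x, 0 ≤ η x ∧ η x ≤ 1) ∧
  (∀ x : Euc n, ‖x‖ ≤ 1 → η x = 1) ∧ (∀ x : Euc n, 2 ≤ ‖x‖ → η x = 0)

def cutoffSq (n : ℕ) (η : Euc n → ℝ) (R : ℝ) : Euc n → ℝ :=
  fun x => (η (R⁻¹ • x)) ^ 2

/-!
Test the inequality with `φ = η_R ^ (k + 1)`, where `η_R` is a cutoff equal to `1` on the ball of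
radius `R`. By convexity of `t ↦ t ^ (k + 1)` and scaling, `L_K φ ≤ A R ^ (-2s) η_R ^ k`. If
`k + 1 ≤ k q`, Young's inequality bounds `A R ^ (-2s) u η_R ^ k` by `u ^ q φ / q`, which is absorbed
on the left, plus a constant multiple of `R ^ (-2s q')` on the support of `φ`. Hence
`∫_{B_R} u ^ q ≤ C R ^ (n - 2s q')`, where `q' = q / (q - 1)`, and the exponent of `R` is negative
exactly in the subcritical range.
-/

open Filter Function Module
open scoped Topology

section SecondDifference

variable {E : Type*}

/-- The symmetric second difference of `f` at `x` with increment `z`, with the sign that makes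
`LK` half of its integral against the kernel. -/
def secondDifference [AddGroup E] (f : E → ℝ) (x z : E) : ℝ :=
  2 * f x - f (x + z) - f (x - z)

theorem pow_succ_sub_pow_succ_le {a b : ℝ} (ha : 0 ≤ a) (hb : 0 ≤ b) (k : ℕ) :
    a ^ (k + 1) - b ^ (k + 1) ≤ (k + 1) * a ^ k * (a - b) := by
  induction k with
  | zero => simp
  | succ k ih =>
    have same_sign : 0 ≤ (a ^ (k + 1) - b ^ (k + 1)) * (a - b) := by
      rcases le_total a b with h | h
      · exact mul_nonneg_of_nonpos_of_nonpos
          (sub_nonpos.2 (pow_le_pow_left₀ ha h _)) (sub_nonpos.2 h)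
      · exact mul_nonneg (sub_nonneg.2 (pow_le_pow_left₀ hb h _)) (sub_nonneg.2 h)
    calc a ^ (k + 1 + 1) - b ^ (k + 1 + 1)
        = a * (a ^ (k + 1) - b ^ (k + 1)) + b ^ (k + 1) * (a - b) := by ring
      _ ≤ a * ((k + 1) * a ^ k * (a - b)) + a ^ (k + 1) * (a - b) := by
        linarith [mul_le_mul_of_nonneg_left ih ha]
      _ = ((k + 1 : ℕ) + 1) * a ^ (k + 1) * (a - b) := by push_cast; ring

theorem secondDifference_pow_succ_le [AddGroup E] {f : E → ℝ} (hf : ∀ x, 0 ≤ f x) (k : ℕ)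
    (x z : E) :
    secondDifference (fun y => f y ^ (k + 1)) x z ≤ (k + 1) * f x ^ k * secondDifference f x z := by
  have right := pow_succ_sub_pow_succ_le (hf x) (hf (x + z)) k
  have left := pow_succ_sub_pow_succ_le (hf x) (hf (x - z)) k
  simp only [secondDifference]
  linarith

variable [NormedAddCommGroup E] [NormedSpace ℝ E]

theorem abs_secondDifference_le_of_lipschitzWith_fderiv {f : E → ℝ} {L : NNReal}
    (hf : Differentiable ℝ f) (hL : LipschitzWith L (fderiv ℝ f)) (x z : E) :
    |secondDifference f x z| ≤ 2 * L * ‖z‖ ^ 2 := by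
  have hasFDerivAt (w : E) : HasFDerivAt (fun w => f (x + w) + f (x - w))
      (fderiv ℝ f (x + w) - fderiv ℝ f (x - w)) w := by
    have right := (hf (x + w)).hasFDerivAt.comp w ((hasFDerivAt_id w).const_add x)
    have left := (hf (x - w)).hasFDerivAt.comp w ((hasFDerivAt_id w).const_sub x)
    rw [ContinuousLinearMap.comp_id] at right
    rw [ContinuousLinearMap.comp_neg, ContinuousLinearMap.comp_id] at left
    rw [sub_eq_add_neg]
    exact right.add left
  have fderiv_le (w : E) (hw : w ∈ closedBall (0 : E) ‖z‖) :
      ‖fderiv ℝ f (x + w) - fderiv ℝ f (x - w)‖ ≤ 2 * L * ‖z‖ := by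
    calc ‖fderiv ℝ f (x + w) - fderiv ℝ f (x - w)‖
        ≤ L * ‖x + w - (x - w)‖ := hL.norm_sub_le _ _
      _ = 2 * L * ‖w‖ := by
        rw [add_sub_sub_cancel, ← two_smul ℝ w, norm_smul, Real.norm_two]; ring
      _ ≤ 2 * L * ‖z‖ := by gcongr; simpa using hw
  have mean_value := (convex_closedBall (0 : E) ‖z‖).norm_image_sub_le_of_norm_hasFDerivWithin_le
    (fun w _ => (hasFDerivAt w).hasFDerivWithinAt) fderiv_le
    (mem_closedBall_self (norm_nonneg z)) (mem_closedBall_zero_iff.2 le_rfl)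
  calc |secondDifference f x z|
      = ‖f (x + z) + f (x - z) - (f (x + 0) + f (x - 0))‖ := by
        rw [secondDifference, ← abs_neg, Real.norm_eq_abs, add_zero, sub_zero]; ring_nf
    _ ≤ 2 * L * ‖z‖ * ‖z - 0‖ := mean_value
    _ = 2 * L * ‖z‖ ^ 2 := by rw [sub_zero]; ring

theorem exists_abs_secondDifference_le_min {f : E → ℝ} (hf : ContDiff ℝ 2 f)
    (hfc : HasCompactSupport f) :
    ∃ C, 0 ≤ C ∧ ∀ x z, |secondDifference f x z| ≤ C * min (‖z‖ ^ 2) 1 := by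
  obtain ⟨L, hL⟩ := ContDiff.lipschitzWith_of_hasCompactSupport (hfc.fderiv ℝ)
    (hf.fderiv_right (m := 1) le_rfl) one_ne_zero
  obtain ⟨M, hM⟩ := hfc.exists_bound_of_continuous hf.continuous
  refine ⟨max (2 * L) (4 * M), le_max_of_le_left (by positivity), fun x z => ?_⟩
  have bounded : |secondDifference f x z| ≤ 4 * M := by
    have hx := abs_le.1 (hM x)
    have hadd := abs_le.1 (hM (x + z))
    have hsub := abs_le.1 (hM (x - z))
    rw [secondDifference, abs_le]
    constructor <;> linarith
  have quadratic := abs_secondDifference_le_of_lipschitzWith_fderiv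
    (hf.differentiable two_ne_zero) hL x z
  rcases le_total (‖z‖ ^ 2) 1 with h | h
  · rw [min_eq_left h]
    exact quadratic.trans (by gcongr; exact le_max_left _ _)
  · rw [min_eq_right h, mul_one]
    exact bounded.trans (le_max_right _ _)

end SecondDifference

section Integration

variable {α : Type*} [MeasurableSpace α] {μ : Measure α}

theorem integral_mono_of_nonneg_right {f g : α → ℝ} (hg : Integrable g μ) (hg0 : 0 ≤ᵐ[μ] g)
    (hfg : f ≤ᵐ[μ] g) : ∫ x, f x ∂μ ≤ ∫ x, g x ∂μ := by
  by_cases hf : Integrable f μ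
  · exact integral_mono_ae hf hg hfg
  · exact integral_undef hf ▸ integral_nonneg_of_ae hg0

theorem integral_le_rpow_mul_measureReal_of_integral_le {p q D : ℝ} (hpq : q.HolderConjugate p)
    (hD : 0 ≤ D) {B : Set α} (hB : MeasurableSet B) (hμB : μ B ≠ ⊤) {f F g : α → ℝ}
    (hf : ∀ x, 0 ≤ f x) (hfB : support f ⊆ B) (hF : Integrable F μ) (hfF : ∀ x, f x ^ q ≤ F x)
    (hgf : ∀ x, g x ≤ D * f x) (hFg : ∫ x, F x ∂μ ≤ ∫ x, g x ∂μ) :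
    ∫ x, F x ∂μ ≤ D ^ p * μ.real B := by
  have hq : 0 < q := hpq.pos
  have hp : 0 < p := hpq.symm.pos
  have hF0 (x : α) : 0 ≤ F x := (Real.rpow_nonneg (hf x) q).trans (hfF x)
  have young (x : α) : g x ≤ F x / q + B.indicator (fun _ => D ^ p / p) x := by
    refine (hgf x).trans ?_
    by_cases hx : x ∈ B
    · rw [Set.indicator_of_mem hx]
      calc D * f x = f x * D := mul_comm _ _
        _ ≤ f x ^ q / q + D ^ p / p := Real.young_inequality_of_nonneg (hf x) hD hpq
        _ ≤ F x / q + D ^ p / p := by gcongr; exact hfF x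
    · rw [Set.indicator_of_notMem hx, notMem_support.1 (mt (@hfB x) hx), mul_zero, add_zero]
      exact div_nonneg (hF0 x) hq.le
  have integrable_indicator : Integrable (B.indicator fun _ => D ^ p / p) μ :=
    (integrable_indicator_iff hB).2 (integrableOn_const hμB)
  have absorb : ∫ x, F x ∂μ ≤ (∫ x, F x ∂μ) / q + D ^ p * μ.real B / p :=
    calc ∫ x, F x ∂μ ≤ ∫ x, g x ∂μ := hFg
      _ ≤ ∫ x, (F x / q + B.indicator (fun _ => D ^ p / p) x) ∂μ :=
        integral_mono_of_nonneg_right ((hF.div_const q).add integrable_indicator)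
          (ae_of_all _ fun x => add_nonneg (div_nonneg (hF0 x) hq.le)
            (Set.indicator_nonneg (fun _ _ => by positivity) x))
          (ae_of_all _ young)
      _ = (∫ x, F x ∂μ) / q + D ^ p * μ.real B / p := by
        rw [integral_add (hF.div_const q) integrable_indicator, integral_div,
          integral_indicator hB, setIntegral_const, smul_eq_mul]
        ring
  have split : (∫ x, F x ∂μ) = (∫ x, F x ∂μ) / q + (∫ x, F x ∂μ) / p := by
    rw [div_eq_mul_inv, div_eq_mul_inv, ← mul_add, hpq.inv_add_inv_eq_one, mul_one]
  exact (div_le_div_iff_of_pos_right hp).1 (by linarith)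

theorem ae_eq_zero_of_tendsto_setIntegral_ball [PseudoMetricSpace α] [OpensMeasurableSpace α]
    {f : α → ℝ} {x₀ : α} (hf : 0 ≤ᵐ[μ] f) (hfi : ∀ R, IntegrableOn f (ball x₀ R) μ)
    (hlim : Tendsto (fun R => ∫ x in ball x₀ R, f x ∂μ) atTop (𝓝 0)) : f =ᵐ[μ] 0 := by
  have cover : AECover μ atTop fun R : ℝ => ball x₀ R := aecover_ball tendsto_id
  exact (integral_eq_zero_iff_of_nonneg_ae hf
    (cover.integrable_of_integral_tendsto_of_nonneg_ae 0 hfi hf hlim)).1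
    (cover.integral_eq_of_tendsto_of_nonneg_ae 0 hf hfi hlim)

end Integration

section RadialWeight

variable {E : Type*} [NormedAddCommGroup E] [NormedSpace ℝ E]

theorem comp_inv_smul_mul_norm_rpow (f : E → ℝ) {R : ℝ} (hR : 0 < R) (α : ℝ) (z : E) :
    f (R⁻¹ • z) * ‖z‖ ^ α = R ^ α * (f (R⁻¹ • z) * ‖R⁻¹ • z‖ ^ α) := by
  have norm_eq : ‖z‖ = R * ‖R⁻¹ • z‖ := by
    rw [norm_smul, norm_inv, Real.norm_of_nonneg hR.le, mul_inv_cancel_left₀ hR.ne']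
  conv_lhs => rw [norm_eq, Real.mul_rpow hR.le (norm_nonneg _)]
  ring

variable [FiniteDimensional ℝ E] [MeasurableSpace E] [BorelSpace E] {μ : Measure E}
  [μ.IsAddHaarMeasure]

theorem integrable_min_norm_sq_mul_norm_rpow {σ : ℝ} (hσ : σ ∈ Set.Ioo (0 : ℝ) 2) :
    Integrable (fun z : E => min (‖z‖ ^ 2) 1 * ‖z‖ ^ (-(finrank ℝ E : ℝ) - σ)) μ := by
  set r : ℝ := finrank ℝ E + σ with hr
  have hr0 : 0 ≤ r := add_nonneg (Nat.cast_nonneg _) hσ.1.le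
  rw [show -(finrank ℝ E : ℝ) - σ = -r by ring]
  have measurable : Measurable fun z : E => min (‖z‖ ^ 2) 1 * ‖z‖ ^ (-r) := by fun_prop
  rcases subsingleton_or_nontrivial E with _ | _
  · simp [Subsingleton.elim _ (0 : E)]
  have near : IntegrableOn (fun z : E => min (‖z‖ ^ 2) 1 * ‖z‖ ^ (-r)) (ball 0 1) μ := by
    refine integrableOn_ball_of_norm_le_rpow (C := 1) (α := r - 2) finrank_pos
      (by linarith [hσ.2]) (ae_of_all _ fun z => ?_) measurable.aestronglyMeasurable
    rw [Real.norm_of_nonneg (by positivity), one_mul]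
    rcases eq_or_ne z 0 with rfl | hz
    · simpa using Real.rpow_nonneg le_rfl _
    · calc min (‖z‖ ^ 2) 1 * ‖z‖ ^ (-r) ≤ ‖z‖ ^ 2 * ‖z‖ ^ (-r) := by gcongr; exact min_le_left _ _
        _ = ‖z‖ ^ (-(r - 2)) := by
          rw [← Real.rpow_natCast, ← Real.rpow_add (norm_pos_iff.2 hz)]; congr 1; push_cast; ring
  have far : IntegrableOn (fun z : E => min (‖z‖ ^ 2) 1 * ‖z‖ ^ (-r)) (ball 0 1)ᶜ μ := by
    refine ((integrable_one_add_norm (r := r) (by linarith [hσ.1, hr])).const_mul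
      (2 ^ r : ℝ)).integrableOn.mono' measurable.aestronglyMeasurable
      ((ae_restrict_iff' measurableSet_ball.compl).2 (ae_of_all _ fun z hz => ?_))
    have hz1 : 1 ≤ ‖z‖ := by simpa using hz
    rw [Real.norm_of_nonneg (by positivity)]
    calc min (‖z‖ ^ 2) 1 * ‖z‖ ^ (-r) ≤ ‖z‖ ^ (-r) :=
          mul_le_of_le_one_left (by positivity) (min_le_right _ _)
      _ = 2 ^ r * (2 * ‖z‖) ^ (-r) := by
        rw [Real.mul_rpow two_pos.le (norm_nonneg z), ← mul_assoc, ← Real.rpow_add two_pos,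
          add_neg_cancel, Real.rpow_zero, one_mul]
      _ ≤ 2 ^ r * (1 + ‖z‖) ^ (-r) := by
        gcongr ?_ * ?_
        exact Real.rpow_le_rpow_of_nonpos (by positivity) (by linarith) (neg_nonpos.2 hr0)
  exact integrableOn_univ.1 (Set.union_compl_self (ball (0 : E) 1) ▸ near.union far)

theorem integrable_comp_inv_smul_mul_norm_rpow {f : E → ℝ} {R α : ℝ} (hR : 0 < R)
    (hf : Integrable (fun z => f z * ‖z‖ ^ α) μ) :
    Integrable (fun z => f (R⁻¹ • z) * ‖z‖ ^ α) μ := by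
  simp only [comp_inv_smul_mul_norm_rpow f hR α]
  exact (hf.comp_smul (inv_ne_zero hR.ne')).const_mul _

theorem integral_comp_inv_smul_mul_norm_rpow (f : E → ℝ) {R : ℝ} (hR : 0 < R) (α : ℝ) :
    ∫ z, f (R⁻¹ • z) * ‖z‖ ^ α ∂μ = R ^ (finrank ℝ E + α) * ∫ z, f z * ‖z‖ ^ α ∂μ := by
  simp only [comp_inv_smul_mul_norm_rpow f hR α]
  rw [integral_const_mul,
    Measure.integral_comp_inv_smul_of_nonneg μ (fun z => f z * ‖z‖ ^ α) hR.le, smul_eq_mul,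
    Real.rpow_add hR, Real.rpow_natCast]
  ring

end RadialWeight

theorem exists_nat_add_one_le_mul {q : ℝ} (hq : 1 < q) : ∃ k : ℕ, k ≠ 0 ∧ (k : ℝ) + 1 ≤ k * q := by
  obtain ⟨k, hk⟩ := exists_nat_gt (1 / (q - 1))
  rw [div_lt_iff₀ (sub_pos.2 hq)] at hk
  exact ⟨k, by rintro rfl; norm_num at hk, by linarith⟩

section Cutoff

variable {n : ℕ} {η : Euc n → ℝ} {R : ℝ}

/-- The power `η_R ^ m` of the cutoff rescaled to radius `R`, so that `cutoffSq n η R` is the case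
`m = 2`. -/
def cutoffPow (η : Euc n → ℝ) (R : ℝ) (m : ℕ) : Euc n → ℝ :=
  fun x => η (R⁻¹ • x) ^ m

theorem exists_isCutoff (n : ℕ) : ∃ η, IsCutoff n η := by
  let b : ContDiffBump (0 : Euc n) := ⟨1, 2, one_pos, one_lt_two⟩
  exact ⟨b, b.contDiff, fun _ => ⟨b.nonneg, b.le_one⟩,
    fun _ hx => b.one_of_mem_closedBall (mem_closedBall_zero_iff.2 hx),
    fun x hx => b.zero_of_le_dist (by rwa [dist_zero_right])⟩

namespace IsCutoff

theorem hasCompactSupport (hη : IsCutoff n η) : HasCompactSupport η :=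
  .of_support_subset_isCompact (isCompact_closedBall 0 2) fun x hx =>
    mem_closedBall_zero_iff.2 (not_lt.1 fun h => hx (hη.2.2.2 x h.le))

theorem cutoffPow_nonneg (hη : IsCutoff n η) (m : ℕ) (x : Euc n) : 0 ≤ cutoffPow η R m x :=
  pow_nonneg (hη.2.1 _).1 m

theorem cutoffPow_eq_one (hη : IsCutoff n η) (hR : 0 < R) (m : ℕ) {x : Euc n} (hx : ‖x‖ ≤ R) :
    cutoffPow η R m x = 1 := by
  rw [cutoffPow, hη.2.2.1, one_pow]
  rwa [norm_smul, norm_inv, Real.norm_of_nonneg hR.le, inv_mul_le_one₀ hR]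

theorem support_cutoffPow_subset (hη : IsCutoff n η) (hR : 0 < R) {m : ℕ} (hm : m ≠ 0) :
    support (cutoffPow η R m) ⊆ ball 0 (2 * R) := by
  intro x hx
  by_contra hxR
  refine hx ?_
  rw [cutoffPow, hη.2.2.2, zero_pow hm]
  rw [norm_smul, norm_inv, Real.norm_of_nonneg hR.le, inv_mul_eq_div, le_div_iff₀ hR]
  simpa using hxR

theorem isTestFun_cutoffPow (hη : IsCutoff n η) (hR : 0 < R) {m : ℕ} (hm : m ≠ 0) :
    IsTestFun n (cutoffPow η R m) :=
  ⟨(hη.1.comp (contDiff_const_smul _)).pow m,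
    .of_support_subset_isCompact (isCompact_closedBall 0 (2 * R))
      ((hη.support_cutoffPow_subset hR hm).trans ball_subset_closedBall)⟩

theorem setIntegral_ball_le_integral_mul_cutoffPow (hη : IsCutoff n η) (hR : 0 < R) {f : Euc n → ℝ}
    (hf : ∀ x, 0 ≤ f x) {m : ℕ} (hfη : Integrable fun x => f x * cutoffPow η R m x) :
    ∫ x in ball 0 R, f x ≤ ∫ x, f x * cutoffPow η R m x :=
  calc ∫ x in ball 0 R, f x = ∫ x in ball 0 R, f x * cutoffPow η R m x :=
        setIntegral_congr_fun measurableSet_ball fun x hx => by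
          rw [hη.cutoffPow_eq_one hR m (mem_ball_zero_iff.1 hx).le, mul_one]
    _ ≤ ∫ x, f x * cutoffPow η R m x :=
        setIntegral_le_integral hfη
          (ae_of_all _ fun x => mul_nonneg (hf x) (hη.cutoffPow_nonneg m x))

theorem mul_cutoffPow_rpow_le (hη : IsCutoff n η) {q : ℝ} {k : ℕ} (hk : (k : ℝ) + 1 ≤ k * q)
    {a : ℝ} (ha : 0 ≤ a) (R : ℝ) (x : Euc n) :
    (a * cutoffPow η R k x) ^ q ≤ a ^ q * cutoffPow η R (k + 1) x := by
  obtain ⟨h0, h1⟩ := hη.2.1 (R⁻¹ • x)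
  rw [Real.mul_rpow ha (hη.cutoffPow_nonneg k x)]
  gcongr
  rw [cutoffPow, cutoffPow, ← Real.rpow_natCast, ← Real.rpow_mul h0, ← Real.rpow_natCast]
  exact Real.rpow_le_rpow_of_exponent_ge' h0 h1 (by positivity) (by exact_mod_cast hk)

end IsCutoff

end Cutoff

/-- Nonnegative measurable kernels that satisfy the upper bound of `IsAdmissibleKernel`. They need
not be even and may vanish. -/
structure IsDominatedKernel (n : ℕ) (s Lam : ℝ) (K : Euc n → ℝ) : Prop where
  const_nonneg : 0 ≤ Lam
  measurable : Measurable K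
  nonneg : ∀ z, z ≠ 0 → 0 ≤ K z
  le_rpow : ∀ z, z ≠ 0 → K z ≤ Lam * ‖z‖ ^ (-(n : ℝ) - 2 * s)

theorem IsAdmissibleKernel.isDominatedKernel {n : ℕ} {s lam Lam : ℝ} {K : Euc n → ℝ}
    (hK : IsAdmissibleKernel n s lam Lam K) : IsDominatedKernel n s Lam K where
  const_nonneg := hK.1.le.trans hK.2.1
  measurable := hK.2.2.1
  nonneg z hz := (mul_nonneg hK.1.le (by positivity)).trans (hK.2.2.2.2 z hz).1
  le_rpow z hz := (hK.2.2.2.2 z hz).2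

section Liouville

variable {n : ℕ} {s Lam p q : ℝ} {K u η : Euc n → ℝ}

theorem exists_secondDifference_cutoffPow_mul_le (hK : IsDominatedKernel n s Lam K)
    (hη : ContDiff ℝ 2 η) (hηc : HasCompactSupport η) (hη0 : ∀ x, 0 ≤ η x) (k : ℕ) :
    ∃ C, 0 ≤ C ∧ ∀ R x z, secondDifference (cutoffPow η R (k + 1)) x z * K z ≤
      C * cutoffPow η R k x * (min (‖R⁻¹ • z‖ ^ 2) 1 * ‖z‖ ^ (-(n : ℝ) - 2 * s)) := by
  obtain ⟨C, hC, hηC⟩ := exists_abs_secondDifference_le_min hη hηc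
  have hLam := hK.const_nonneg
  refine ⟨(k + 1) * C * Lam, by positivity, fun R x z => ?_⟩
  have cutoff_nonneg : 0 ≤ cutoffPow η R k x := pow_nonneg (hη0 _) k
  rcases eq_or_ne z 0 with rfl | hz
  · simp only [secondDifference, add_zero, sub_zero]
    ring_nf
    positivity
  have hKz := hK.nonneg z hz
  calc secondDifference (cutoffPow η R (k + 1)) x z * K z
      ≤ (k + 1) * cutoffPow η R k x * secondDifference (fun y => η (R⁻¹ • y)) x z * K z := by
        gcongr
        exact secondDifference_pow_succ_le (fun y => hη0 (R⁻¹ • y)) k x z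
    _ ≤ (k + 1) * cutoffPow η R k x * (C * min (‖R⁻¹ • z‖ ^ 2) 1) * K z := by
        gcongr
        simpa only [secondDifference, smul_add, smul_sub] using
          (le_abs_self _).trans (hηC (R⁻¹ • x) (R⁻¹ • z))
    _ ≤ (k + 1) * cutoffPow η R k x * (C * min (‖R⁻¹ • z‖ ^ 2) 1) *
          (Lam * ‖z‖ ^ (-(n : ℝ) - 2 * s)) := by
        gcongr
        exact hK.le_rpow z hz
    _ = _ := by ring

theorem exists_LK_cutoffPow_le (hs : s ∈ Set.Ioo (0 : ℝ) 1) (hK : IsDominatedKernel n s Lam K)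
    (hη : ContDiff ℝ 2 η) (hηc : HasCompactSupport η) (hη0 : ∀ x, 0 ≤ η x) (k : ℕ) :
    ∃ A, 0 ≤ A ∧ ∀ R, 0 < R → ∀ x,
      LK n K (cutoffPow η R (k + 1)) x ≤ A * R ^ (-(2 * s)) * cutoffPow η R k x := by
  obtain ⟨C, hC, pointwise⟩ := exists_secondDifference_cutoffPow_mul_le hK hη hηc hη0 k
  have weight_integrable : Integrable
      fun z : Euc n => min (‖z‖ ^ 2) 1 * ‖z‖ ^ (-(n : ℝ) - 2 * s) := by
    simpa using integrable_min_norm_sq_mul_norm_rpow (E := Euc n) (μ := volume) (σ := 2 * s)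
      ⟨by linarith [hs.1], by linarith [hs.2]⟩
  set I := ∫ z : Euc n, min (‖z‖ ^ 2) 1 * ‖z‖ ^ (-(n : ℝ) - 2 * s)
  have hI : 0 ≤ I := integral_nonneg fun z => by positivity
  refine ⟨1 / 2 * (C * I), mul_nonneg one_half_pos.le (mul_nonneg hC hI), fun R hR x => ?_⟩
  have cutoff_nonneg : 0 ≤ cutoffPow η R k x := pow_nonneg (hη0 _) k
  calc LK n K (cutoffPow η R (k + 1)) x
      = 1 / 2 * ∫ z, secondDifference (cutoffPow η R (k + 1)) x z * K z := rfl
    _ ≤ 1 / 2 * ∫ z : Euc n, C * cutoffPow η R k x *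
          (min (‖R⁻¹ • z‖ ^ 2) 1 * ‖z‖ ^ (-(n : ℝ) - 2 * s)) := by
        refine mul_le_mul_of_nonneg_left (integral_mono_of_nonneg_right
          ((integrable_comp_inv_smul_mul_norm_rpow (f := fun z => min (‖z‖ ^ 2) 1) hR
            weight_integrable).const_mul _)
          (ae_of_all _ fun z => by dsimp only [Pi.zero_apply]; positivity)
          (ae_of_all _ (pointwise R x))) one_half_pos.le
    _ = 1 / 2 * (C * I) * R ^ (-(2 * s)) * cutoffPow η R k x := by
        rw [integral_const_mul,
          integral_comp_inv_smul_mul_norm_rpow (fun z => min (‖z‖ ^ 2) 1) hR,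
          finrank_euclideanSpace_fin, add_sub_assoc', add_neg_cancel, zero_sub]
        ring

theorem MemLqLoc.locallyIntegrable (hu : MemLqLoc n q u) :
    LocallyIntegrable fun x => u x ^ q := fun x =>
  ⟨ball 0 (‖x‖ + 1), isOpen_ball.mem_nhds (by simp), hu _ (by positivity)⟩

theorem MemLqLoc.integrable_mul_of_isTestFun (hu : MemLqLoc n q u) {φ : Euc n → ℝ}
    (hφ : IsTestFun n φ) : Integrable fun x => u x ^ q * φ x :=
  hu.locallyIntegrable.integrable_smul_right_of_hasCompactSupport hφ.1.continuous hφ.2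

theorem IsWeakSupersol.exists_setIntegral_ball_le (hs : s ∈ Set.Ioo (0 : ℝ) 1)
    (hK : IsDominatedKernel n s Lam K) (hpq : q.HolderConjugate p)
    (hu : IsWeakSupersol n s q K u) :
    ∃ C, ∀ R, 0 < R → ∫ x in ball 0 R, u x ^ q ≤ C * R ^ (n - 2 * s * p) := by
  obtain ⟨-, hu0, huq, -, hsuper⟩ := hu
  obtain ⟨η, hη⟩ := exists_isCutoff n
  obtain ⟨k, hk0, hk⟩ := exists_nat_add_one_le_mul hpq.lt
  obtain ⟨A, hA, hLK⟩ := exists_LK_cutoffPow_le hs hK (hη.1.of_le (by norm_cast))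
    hη.hasCompactSupport (fun x => (hη.2.1 x).1) k
  refine ⟨A ^ p * volume.real (ball (0 : Euc n) 2), fun R hR => ?_⟩
  have htest : IsTestFun n (cutoffPow η R (k + 1)) := hη.isTestFun_cutoffPow hR k.succ_ne_zero
  have hint := huq.integrable_mul_of_isTestFun htest
  have volume_ball : volume.real (ball (0 : Euc n) (2 * R)) =
      R ^ (n : ℝ) * volume.real (ball (0 : Euc n) 2) := by
    rw [mul_comm 2 R, measureReal_def, Measure.addHaar_ball_mul_of_pos volume 0 hR,
      ENNReal.toReal_mul, ENNReal.toReal_ofReal (by positivity), finrank_euclideanSpace_fin,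
      Real.rpow_natCast, measureReal_def]
  calc ∫ x in ball 0 R, u x ^ q
      ≤ ∫ x, u x ^ q * cutoffPow η R (k + 1) x :=
        hη.setIntegral_ball_le_integral_mul_cutoffPow hR (fun x => Real.rpow_nonneg (hu0 x) q) hint
    _ ≤ (A * R ^ (-(2 * s))) ^ p * volume.real (ball (0 : Euc n) (2 * R)) :=
        integral_le_rpow_mul_measureReal_of_integral_le hpq (by positivity) measurableSet_ball
          measure_ball_lt_top.ne (f := fun x => u x * cutoffPow η R k x)
          (fun x => mul_nonneg (hu0 x) (hη.cutoffPow_nonneg k x))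
          ((support_mul_subset_right _ _).trans (hη.support_cutoffPow_subset hR hk0)) hint
          (fun x => hη.mul_cutoffPow_rpow_le hk (hu0 x) R x)
          (fun x => (mul_le_mul_of_nonneg_left (hLK R hR x) (hu0 x)).trans_eq (by ring))
          (hsuper _ htest (hη.cutoffPow_nonneg _))
    _ = A ^ p * volume.real (ball (0 : Euc n) 2) * R ^ (n - 2 * s * p) := by
        rw [volume_ball, Real.mul_rpow hA (by positivity), ← Real.rpow_mul hR.le,
          show (n : ℝ) - 2 * s * p = -(2 * s) * p + n by ring, Real.rpow_add hR]
        ring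

end Liouville

theorem liouville_subcritical_general
    (n : ℕ) (s : ℝ) (hs : s ∈ Set.Ioo (0 : ℝ) 1)
    (Lam : ℝ) (K : Euc n → ℝ) (hK : IsDominatedKernel n s Lam K)
    (q : ℝ) (hq1 : 1 < q) (hq2 : q * ((n : ℝ) - 2 * s) < n)
    (u : Euc n → ℝ) (hu : IsWeakSupersol n s q K u) :
    ∀ᵐ x : Euc n, u x = 0 := by
  have exponent_neg : (n : ℝ) - 2 * s * q.conjExponent < 0 := by
    rw [Real.conjExponent, sub_neg, ← mul_div_assoc, lt_div_iff₀ (sub_pos.2 hq1)]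
    linarith
  obtain ⟨C, hC⟩ := hu.exists_setIntegral_ball_le hs hK (.conjExponent hq1)
  obtain ⟨-, hu0, huq, -⟩ := hu
  have bound_tendsto : Tendsto (fun R : ℝ => C * R ^ (n - 2 * s * q.conjExponent)) atTop (𝓝 0) := by
    simpa using (tendsto_rpow_neg_atTop (neg_pos.2 exponent_neg)).const_mul C
  have integral_tendsto : Tendsto (fun R => ∫ x in ball (0 : Euc n) R, u x ^ q) atTop (𝓝 0) :=
    squeeze_zero' (.of_forall fun R => integral_nonneg fun x => Real.rpow_nonneg (hu0 x) q)
      ((eventually_gt_atTop 0).mono hC) bound_tendsto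
  have rpow_ae_eq_zero := ae_eq_zero_of_tendsto_setIntegral_ball
    (ae_of_all _ fun x => Real.rpow_nonneg (hu0 x) q)
    (fun R => (huq.locallyIntegrable.integrableOn_isCompact (isCompact_closedBall 0 R)).mono_set
      ball_subset_closedBall) integral_tendsto
  filter_upwards [rpow_ae_eq_zero] with x hx
  exact (Real.rpow_eq_zero (hu0 x) (by linarith)).1 hx

/-- Liouville theorem in the subcritical range `1 < q < n/(n-2s)`. -/
theorem liouville_subcritical
    (n : ℕ) (hn : 1 ≤ n) (s : ℝ) (hs : s ∈ Set.Ioo (0 : ℝ) 1)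
    (hns : 2 * s < (n : ℝ))
    (lam Lam : ℝ) (K : Euc n → ℝ) (hK : IsAdmissibleKernel n s lam Lam K)
    (q : ℝ) (hq1 : 1 < q) (hq2 : q < (n : ℝ) / ((n : ℝ) - 2 * s))
    (u : Euc n → ℝ) (hu : IsWeakSupersol n s q K u) :
    ∀ᵐ x : Euc n, u x = 0 :=
  liouville_subcritical_general n s hs Lam K hK.isDominatedKernel q hq1
    ((lt_div_iff₀ (sub_pos.2 hns)).1 hq2) u hu
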